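/- Let $k$ be an algebraically closed field of characteristic zero, $V$ a finite-dimensional $k$-vector space, and $G \subseteq \mathrm{GL}(V)$ a connected semisimple algebraic group with $\dim V/\!\!/G = 1$. Then the nullcone $\mathcal{N}_{G,V}$ is an irreducible algebraic variety. -/

import Mathlib

open MvPolynomial

noncomputable section

/-- The Zariski topology on affine space `σ → k`. -/
def zTop (k : Type*) [CommSemiring k] (σ : Type*) : TopologicalSpace (σ → k) :=
  TopologicalSpace.generateFrom
    {U | ∃ p : MvPolynomial σ k, U = {x | MvPolynomial.eval x p ≠ 0}}

/-- Zariski topology on square matrices. -/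
def mTop (k : Type*) [CommSemiring k] (n : ℕ) : TopologicalSpace (Matrix (Fin n) (Fin n) k) :=
  TopologicalSpace.induced (fun M (p : Fin n × Fin n) => M p.1 p.2) (zTop k (Fin n × Fin n))

/-- Zariski topology on `GL n k` induced from matrices. -/
def glTop (k : Type*) [CommRing k] (n : ℕ) : TopologicalSpace (GL (Fin n) k) :=
  TopologicalSpace.induced (fun g => (g : Matrix (Fin n) (Fin n) k)) (mTop k n)

variable (k : Type*) [Field k] {n : ℕ}

/-- The orbit of a vector under a subgroup of `GL n k` acting on `kⁿ`. -/
def orbitOf (G : Subgroup (GL (Fin n) k)) (v : Fin n → k) : Set (Fin n → k) :=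
  {w | ∃ g ∈ G, (g : Matrix (Fin n) (Fin n) k).mulVec v = w}

/-- The algebra of `G`-invariant polynomial functions on `kⁿ`, i.e. `k[V]^G`. -/
def invAlg (G : Subgroup (GL (Fin n) k)) : Subalgebra k (MvPolynomial (Fin n) k) where
  carrier := {p | ∀ g ∈ G, ∀ v : Fin n → k,
    eval ((g : Matrix (Fin n) (Fin n) k).mulVec v) p = eval v p}
  mul_mem' := by intro p q hp hq g hg v; simp [map_mul, hp g hg v, hq g hg v]
  add_mem' := by intro p q hp hq g hg v; simp [map_add, hp g hg v, hq g hg v]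
  algebraMap_mem' := by intro r g hg v; simp

/-- The nullcone `𝒩_{G,V} = π⁻¹(π(0))`: the set of points where every invariant takes the
same value as at the origin. -/
def nullcone (G : Subgroup (GL (Fin n) k)) : Set (Fin n → k) :=
  {v | ∀ p ∈ invAlg k G, eval v p = eval (0 : Fin n → k) p}

/-- Krull dimension of a subset of affine space for the Zariski topology. -/
def setDim {n : ℕ} (s : Set (Fin n → k)) : WithBot (WithTop ℕ) :=
  @topologicalKrullDim s (TopologicalSpace.induced ((↑) : s → (Fin n → k)) (zTop k (Fin n)))

/-- `G` is a Zariski-closed subgroup of `GL n k` (an algebraic subgroup). -/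
def IsAlgSubgroup (G : Subgroup (GL (Fin n) k)) : Prop :=
  @IsClosed _ (glTop k n) (G : Set (GL (Fin n) k))

/-- `G` is connected in the Zariski topology. -/
def IsConnectedSub (G : Subgroup (GL (Fin n) k)) : Prop :=
  @IsConnected _ (glTop k n) (G : Set (GL (Fin n) k))

/-- `G` is semisimple: its radical is trivial, i.e. every Zariski-closed connected solvable
normal subgroup of `G` is trivial. -/
def IsSemisimpleSub (G : Subgroup (GL (Fin n) k)) : Prop :=
  ∀ H : Subgroup (GL (Fin n) k), H ≤ G → (H.subgroupOf G).Normal → IsSolvable H →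
    @IsClosed _ (glTop k n) (H : Set (GL (Fin n) k)) →
    @IsConnected _ (glTop k n) (H : Set (GL (Fin n) k)) → H = ⊥

/-
The key point is that a connected semisimple group `G` has no nontrivial characters. Its Lie algebra
`𝔤` has trivial radical: if `𝔞` is an abelian ideal stable under the adjoint action of `G`, then the
elements of `G` in the bicommutant of `𝔞` form a closed commutative normal subgroup containing the
connected sets `closure (exp (t x))` for `x ∈ 𝔞`, so semisimplicity forces `x = 0`. Hence
`𝔤 = [𝔤, 𝔤]`, the differential of a character vanishes on `𝔤`, and in characteristic zero a function
annihilated by all left-invariant derivations in `𝔤` is constant on the irreducible variety `G`.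

An irreducible factor of an invariant is a semi-invariant because `G` is connected, so it is an
invariant because `G` has no characters. If `dim V⫽G = 1`, there is thus an irreducible invariant
`f` with `f(0) = 0`. The ideal `(f) ∩ k[V]^G` is a nonzero prime, hence maximal, so it consists of
all invariants vanishing at `0`, and the nullcone is the irreducible hypersurface `f = 0`.
-/

section Derivations

open KaehlerDifferential TensorProduct in
theorem kaehlerDifferential_ne_zero_of_transcendental {k K : Type*} [Field k] [CharZero k] [Field K]
    [Algebra k K] [Algebra.EssFiniteType k K] {c : K} (hc : Transcendental k c) :
    D k K c ≠ 0 := by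
  algebraize [(Polynomial.aeval c : Polynomial k →ₐ[k] K).toRingHom]
  have : IsScalarTower k (Polynomial k) K :=
    .of_algebraMap_eq fun a => (Polynomial.aeval_C c a).symm
  have : FaithfulSMul (Polynomial k) K :=
    (faithfulSMul_iff_algebraMap_injective _ _).2 (transcendental_iff_injective.1 hc)
  let F := FractionRing (Polynomial k)
  let : Algebra F K := FractionRing.liftAlgebra (Polynomial k) K
  have : CharZero F := charZero_of_injective_algebraMap (algebraMap k F).injective
  have : Algebra.EssFiniteType F K := .of_comp k F K
  have : Algebra.FormallySmooth (Polynomial k) F := .of_isLocalization (nonZeroDivisors _)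
  have : Algebra.FormallySmooth (Polynomial k) K := .comp _ F _
  have hinj : Function.Injective (mapBaseChange k (Polynomial k) K) :=
    (injective_iff_map_eq_zero _).2 fun ω hω => by
      obtain ⟨η, rfl⟩ := (Algebra.H1Cotangent.exact_δ_mapBaseChange k (Polynomial k) K ω).1 hω
      rw [Subsingleton.elim η 0, map_zero]
  have hDX : mapBaseChange k (Polynomial k) K (1 ⊗ₜ D k _ Polynomial.X) = D k K c := by
    rw [mapBaseChange_tmul, one_smul, map_D]
    exact congrArg _ (Polynomial.aeval_X c)
  rw [← hDX, map_ne_zero_iff _ hinj]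
  intro h
  have := congrArg ((TensorProduct.rid _ K) ∘ (polynomialEquiv k).toLinearMap.lTensor K) h
  simp at this

theorem exists_derivation_ne_zero_of_transcendental {k K : Type*} [Field k] [CharZero k] [Field K]
    [Algebra k K] [Algebra.EssFiniteType k K] {c : K} (hc : Transcendental k c) :
    ∃ d : Derivation k K K, d c ≠ 0 := by
  obtain ⟨l, hl⟩ : ∃ l : Module.Dual K (Ω[K⁄k]), l (KaehlerDifferential.D k K c) ≠ 0 := by
    simpa using mt (Module.forall_dual_apply_eq_zero_iff K _).1
      (kaehlerDifferential_ne_zero_of_transcendental hc)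
  exact ⟨l.compDer (KaehlerDifferential.D k K), hl⟩

variable {R S σ : Type*} [CommRing R] [CommRing S] [Algebra R S]

theorem map_derivation_apply {φ : MvPolynomial σ R →ₐ[R] S}
    {D : Derivation R (MvPolynomial σ R) (MvPolynomial σ R)} {d : Derivation R S S}
    (h : ∀ i, φ (D (X i)) = d (φ (X i))) (p : MvPolynomial σ R) : φ (D p) = d (φ p) := by
  induction p using MvPolynomial.induction_on with
  | C a => simp [algHom_C]
  | add p q hp hq => simp only [map_add, hp, hq]
  | mul_X p i hp => simp only [Derivation.leibniz, smul_eq_mul, map_add, map_mul, hp, h]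

theorem map_derivation_congr {φ : MvPolynomial σ R →ₐ[R] S}
    {D₁ D₂ : Derivation R (MvPolynomial σ R) (MvPolynomial σ R)}
    (h : ∀ i, φ (D₁ (X i)) = φ (D₂ (X i))) (p : MvPolynomial σ R) : φ (D₁ p) = φ (D₂ p) := by
  induction p using MvPolynomial.induction_on with
  | C a => simp only [derivation_C]
  | add p q hp hq => simp only [map_add, hp, hq]
  | mul_X p i hp => simp only [Derivation.leibniz, smul_eq_mul, map_add, map_mul, hp, h]

theorem exists_derivation_stable_notMem {k σ : Type*} [Field k] [CharZero k] [Finite σ]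
    (I : Ideal (MvPolynomial σ k)) [I.IsPrime] {p : MvPolynomial σ k}
    (hp : Transcendental k (Ideal.Quotient.mk I p)) :
    ∃ D : Derivation k (MvPolynomial σ k) (MvPolynomial σ k), (∀ q ∈ I, D q ∈ I) ∧ D p ∉ I := by
  let A := MvPolynomial σ k ⧸ I
  let K := FractionRing A
  have : Algebra.EssFiniteType A K := .of_isLocalization K (nonZeroDivisors A)
  have : Algebra.EssFiniteType k K := .comp k A K
  let φ : MvPolynomial σ k →ₐ[k] K := (IsScalarTower.toAlgHom k A K).comp (Ideal.Quotient.mkₐ k I)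
  have hφ : ∀ q, φ q = 0 ↔ q ∈ I := fun q => by
    rw [← Ideal.Quotient.eq_zero_iff_mem]
    exact map_eq_zero_iff _ (IsFractionRing.injective A K)
  obtain ⟨d, hd⟩ := exists_derivation_ne_zero_of_transcendental (c := φ p)
    ((transcendental_algebraMap_iff (IsFractionRing.injective A K)).2 hp)
  obtain ⟨b, hb⟩ := IsLocalization.exist_integer_multiples_of_finite (nonZeroDivisors A)
    fun i => d (φ (X i))
  choose a ha using hb
  choose w hw using fun i => Ideal.Quotient.mk_surjective (a i)
  have hD : ∀ q, φ (mkDerivation k w q) = ((b : A) • d) (φ q) := map_derivation_apply fun i => by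
    rw [mkDerivation_X, Derivation.smul_apply, ← ha, ← hw]
    rfl
  refine ⟨mkDerivation k w, fun q hq => ?_, ?_⟩
  · rw [← hφ, hD, (hφ q).2 hq, map_zero]
  · rw [← hφ, hD]
    exact smul_ne_zero (nonZeroDivisors.coe_ne_zero b) hd

end Derivations

section MatrixPolynomials

open Matrix

variable {R S T ι : Type*} [CommRing R] [CommRing S] [CommRing T] [Algebra R S] [Algebra R T]

/-- Evaluation of a polynomial in the entries of a matrix at a matrix over an algebra. -/
def evalMatrix (Y : Matrix ι ι S) : MvPolynomial (ι × ι) R →ₐ[R] S :=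
  aeval fun ij => Y ij.1 ij.2

@[simp]
theorem evalMatrix_X (Y : Matrix ι ι S) (ij : ι × ι) :
    evalMatrix Y (X ij : MvPolynomial (ι × ι) R) = Y ij.1 ij.2 :=
  aeval_X _ _

theorem algHom_evalMatrix (f : S →ₐ[R] T) (Y : Matrix ι ι S) (p : MvPolynomial (ι × ι) R) :
    f (evalMatrix Y p) = evalMatrix (Y.map f) p := by
  refine DFunLike.congr_fun (?_ : f.comp (evalMatrix Y) = evalMatrix (Y.map f)) p
  ext ij
  simp

theorem mvPolynomialX_map_evalMatrix (Y : Matrix ι ι S) :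
    (mvPolynomialX ι ι R).map (evalMatrix Y) = Y := by
  ext i j
  simp

theorem map_C_map_evalMatrix (Y : Matrix ι ι S) (x : Matrix ι ι R) :
    (x.map C).map (evalMatrix Y) = x.map (algebraMap R S) := by
  ext i j
  simp [algHom_C]

variable [Fintype ι]

/-- The substitution `p(X) ↦ p(a X b)`, i.e. translation of functions on matrices. -/
def matrixTranslate (a b : Matrix ι ι R) : MvPolynomial (ι × ι) R →ₐ[R] MvPolynomial (ι × ι) R :=
  evalMatrix (a.map C * mvPolynomialX ι ι R * b.map C)

theorem evalMatrix_translate (Y : Matrix ι ι S) (a b : Matrix ι ι R)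
    (p : MvPolynomial (ι × ι) R) :
    evalMatrix Y (matrixTranslate a b p) =
      evalMatrix (a.map (algebraMap R S) * Y * b.map (algebraMap R S)) p := by
  rw [matrixTranslate, algHom_evalMatrix, Matrix.map_mul, Matrix.map_mul, map_C_map_evalMatrix,
    map_C_map_evalMatrix, mvPolynomialX_map_evalMatrix]

theorem evalMatrix_translate_self (Y a b : Matrix ι ι R) (p : MvPolynomial (ι × ι) R) :
    evalMatrix Y (matrixTranslate a b p) = evalMatrix (a * Y * b) p := by
  simp only [evalMatrix_translate, Algebra.algebraMap_self, RingHom.coe_id, Matrix.map_id]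

/-- The `(i, j)` entry of the commutator `X y - y X` of the generic matrix `X` with `y`. -/
def commutatorPolynomial (y : Matrix ι ι R) (i j : ι) : MvPolynomial (ι × ι) R :=
  (mvPolynomialX ι ι R * y.map C - y.map C * mvPolynomialX ι ι R : Matrix ι ι _) i j

theorem evalMatrix_commutatorPolynomial (Y : Matrix ι ι S) (y : Matrix ι ι R) (i j : ι) :
    evalMatrix Y (commutatorPolynomial y i j) =
      (Y * y.map (algebraMap R S) - y.map (algebraMap R S) * Y) i j := by
  simp [commutatorPolynomial, Matrix.mul_apply, algHom_C]

/-- The left-invariant vector field on matrices with value `x` at the identity: the derivation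
sending `p` to `X ↦ dp_X(X x)`. -/
def leftInvariantDerivation :
    Matrix ι ι R →ₗ[R] Derivation R (MvPolynomial (ι × ι) R) (MvPolynomial (ι × ι) R) where
  toFun x := mkDerivation R fun ij => ∑ l, X (ij.1, l) * C (x l ij.2)
  map_add' x y := derivation_ext fun ij => by
    simp [mul_add, Finset.sum_add_distrib]
  map_smul' c x := derivation_ext fun ij => by
    simp [Finset.smul_sum, smul_eq_C_mul, mul_left_comm]

theorem leftInvariantDerivation_X (x : Matrix ι ι R) (ij : ι × ι) :
    leftInvariantDerivation x (X ij) = ∑ l, X (ij.1, l) * C (x l ij.2) :=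
  mkDerivation_X _ _ _

theorem leftInvariantDerivation_lie (x y : Matrix ι ι R) :
    leftInvariantDerivation ⁅x, y⁆ = ⁅leftInvariantDerivation x, leftInvariantDerivation y⁆ := by
  refine derivation_ext fun ij => ?_
  have key (x y : Matrix ι ι R) : ∑ l, C (x l ij.2) * ∑ m, X (ij.1, m) * C (y m l) =
      ∑ m, X (ij.1, m) * (C ((y * x) m ij.2) : MvPolynomial (ι × ι) R) := by
    simp only [Matrix.mul_apply, Finset.mul_sum, map_sum, C_mul]
    rw [Finset.sum_comm]
    exact Finset.sum_congr rfl fun _ _ => Finset.sum_congr rfl fun _ _ => by ring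
  simp [leftInvariantDerivation_X, Derivation.commutator_apply, Ring.lie_def, key]

theorem evalMatrix_leftInvariantDerivation_X (Y : Matrix ι ι S) (x : Matrix ι ι R) (ij : ι × ι) :
    evalMatrix Y (leftInvariantDerivation x (X ij)) = (Y * x.map (algebraMap R S)) ij.1 ij.2 := by
  simp [leftInvariantDerivation_X, Matrix.mul_apply, algHom_C]

theorem evalMatrix_leftInvariantDerivation {Y : Matrix ι ι S} {x : Matrix ι ι R}
    {d : Derivation R S S} (h : Y.map d = Y * x.map (algebraMap R S))
    (p : MvPolynomial (ι × ι) R) :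
    evalMatrix Y (leftInvariantDerivation x p) = d (evalMatrix Y p) :=
  map_derivation_apply (fun ij => by
    rw [evalMatrix_leftInvariantDerivation_X, ← h, evalMatrix_X, Matrix.map_apply]) p

theorem leftInvariantDerivation_translate {a b x y : Matrix ι ι R} (h : x * b = b * y)
    (p : MvPolynomial (ι × ι) R) :
    leftInvariantDerivation x (matrixTranslate a b p) =
      matrixTranslate a b (leftInvariantDerivation y p) := by
  refine (map_derivation_apply (fun ij => ?_) p).symm
  rw [matrixTranslate, evalMatrix_leftInvariantDerivation_X, evalMatrix_X, algebraMap_eq,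
    Matrix.mul_assoc _ (b.map C), ← Matrix.map_mul, ← h]
  simp only [Matrix.mul_apply, Matrix.map_apply, mvPolynomialX_apply, C_mul, map_sum,
    Finset.sum_mul, Finset.mul_sum, Derivation.leibniz, leftInvariantDerivation_X, derivation_C,
    smul_eq_mul, mul_zero, add_zero, zero_add]
  rw [Finset.sum_comm]
  refine Finset.sum_congr rfl fun j _ => ?_
  rw [Finset.sum_comm]
  exact Finset.sum_congr rfl fun _ _ => Finset.sum_congr rfl fun _ _ => by ring

end MatrixPolynomials

section TopologicalLemmas

open Topology TopologicalSpace

theorem isIrreducible_image_iff_of_isInducing {X Y : Type*} [TopologicalSpace X]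
    [TopologicalSpace Y] {f : X → Y} (hf : IsInducing f) {s : Set X} :
    IsIrreducible (f '' s) ↔ IsIrreducible s := by
  refine ⟨fun h => ⟨h.nonempty.of_image, fun u v hu hv hsu hsv => ?_⟩,
    fun h => h.image f hf.continuous.continuousOn⟩
  obtain ⟨u', hu', rfl⟩ := hf.isOpen_iff.1 hu
  obtain ⟨v', hv', rfl⟩ := hf.isOpen_iff.1 hv
  simpa only [← Set.preimage_inter, Set.image_inter_nonempty_iff] using
    h.isPreirreducible u' v' hu' hv' (Set.image_inter_nonempty_iff.2 hsu)
      (Set.image_inter_nonempty_iff.2 hsv)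

-- Each point has an irreducible open neighbourhood, so irreducible components are clopen.
theorem irreducibleSpace_of_noetherian_connected_group {M : Type*} [Group M] [TopologicalSpace M]
    [SeparatelyContinuousMul M] [NoetherianSpace M] [ConnectedSpace M] : IrreducibleSpace M := by
  let Z := irreducibleComponent (1 : M)
  have hZ : IsIrreducible Z := isIrreducible_irreducibleComponent
  have hZ_open : IsOpen Z := by
    obtain ⟨o, ho, ⟨y, hy⟩, hoZ⟩ :=
      NoetherianSpace.exists_isOpen_nonempty_subset_irreducibleComponent Z
        (irreducibleComponent_mem_irreducibleComponents 1)
    refine isOpen_iff_forall_mem_open.2 fun z hz => ?_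
    let o' := (fun w => z * y⁻¹ * w) '' o
    have ho' : IsOpen o' := isOpenMap_mul_left _ _ ho
    have hzo' : z ∈ o' := ⟨y, hy, inv_mul_cancel_right z y⟩
    have ho'_irr : IsIrreducible (closure o') := IsIrreducible.closure
      ⟨⟨z, hzo'⟩, (hZ.isPreirreducible.open_subset ho hoZ).image _
        (continuous_const_mul _).continuousOn⟩
    have hZo' : Z ⊆ closure o' :=
      (subset_closure_inter_of_isPreirreducible_of_isOpen hZ.isPreirreducible ho'
        ⟨z, hz, hzo'⟩).trans (closure_mono Set.inter_subset_right)
    exact ⟨o', subset_closure.trans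
      ((irreducibleComponent_mem_irreducibleComponents 1).2 ho'_irr hZo'), ho', hzo'⟩
  have hZ_univ : Z = Set.univ :=
    IsClopen.eq_univ ⟨isClosed_irreducibleComponent, hZ_open⟩ hZ.nonempty
  rwa [irreducibleSpace_def, Set.top_eq_univ, ← hZ_univ]

theorem mapsTo_connectedComponentIn_of_mapsTo {X : Type*} [TopologicalSpace X] {f : X → X}
    (hf : Continuous f) {s : Set X} (hs : Set.MapsTo f s s) {x y : X} (hx : x ∈ s)
    (hy : f x ∈ connectedComponentIn s y) :
    Set.MapsTo f (connectedComponentIn s x) (connectedComponentIn s y) :=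
  connectedComponentIn_eq hy ▸ (hf.continuousOn.mapsTo_connectedComponentIn hx).mono_right
    (connectedComponentIn_mono _ hs.image_subset)

/-- The identity component of a subgroup `H` of a group with a topology. -/
def identityComponent {M : Type*} [Group M] [TopologicalSpace M] [SeparatelyContinuousMul M]
    (H : Subgroup M) : Subgroup M where
  carrier := connectedComponentIn H 1
  one_mem' := mem_connectedComponentIn H.one_mem
  mul_mem' := fun {a b} ha hb =>
    mapsTo_connectedComponentIn_of_mapsTo (continuous_const_mul a)
      (fun _ => H.mul_mem (connectedComponentIn_subset _ _ ha)) H.one_mem (by simpa using ha) hb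
  inv_mem' := fun {a} ha => by
    have haH := connectedComponentIn_subset _ _ ha
    have h : a⁻¹ * 1 ∈ connectedComponentIn (H : Set M) 1 :=
      mapsTo_connectedComponentIn_of_mapsTo (continuous_const_mul a⁻¹)
      (fun _ => H.mul_mem (H.inv_mem haH)) haH
      (by simpa using mem_connectedComponentIn H.one_mem)
      (connectedComponentIn_eq ha ▸ mem_connectedComponentIn H.one_mem)
    rwa [mul_one] at h

end TopologicalLemmas

section ZariskiTopology

open Topology TopologicalSpace

attribute [local instance] zTop glTop

variable {k σ : Type*} [Field k]

theorem isInducing_pointToPoint : IsInducing (pointToPoint (k := k) (K := k) (σ := σ)) where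
  eq_induced := by
    rw [PrimeSpectrum.isTopologicalBasis_basic_opens.eq_generateFrom, induced_generateFrom_eq, zTop]
    congr 1
    have h (p : MvPolynomial σ k) :
        pointToPoint (k := k) (K := k) ⁻¹' PrimeSpectrum.basicOpen p = {x | eval x p ≠ 0} := by
      ext x
      exact (mem_vanishingIdeal_singleton_iff x p).not
    rw [← Set.range_comp]
    ext U
    simp only [Set.mem_range, Function.comp_apply, h, Set.mem_ofPred_eq, eq_comm]

theorem noetherianSpace_zTop [Finite σ] : NoetherianSpace (σ → k) :=
  isInducing_pointToPoint.noetherianSpace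

theorem closure_zTop (s : Set (σ → k)) : closure s = zeroLocus k (vanishingIdeal k s) := by
  rw [isInducing_pointToPoint.closure_eq_preimage_closure_image,
    ← PrimeSpectrum.zeroLocus_vanishingIdeal_eq_closure, vanishingIdeal_pointToPoint]
  ext x
  simp [SetLike.le_def, pointToPoint, PrimeSpectrum.mem_zeroLocus]

theorem isIrreducible_zTop_iff {s : Set (σ → k)} :
    IsIrreducible s ↔ (vanishingIdeal k s).IsPrime := by
  rw [← isIrreducible_image_iff_of_isInducing isInducing_pointToPoint,
    PrimeSpectrum.isIrreducible_iff_vanishingIdeal_isPrime, vanishingIdeal_pointToPoint]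

variable {n : ℕ}

/-- The ideal of polynomials in the matrix entries vanishing on a set of invertible matrices. -/
def glVanishingIdeal (s : Set (GL (Fin n) k)) : Ideal (MvPolynomial (Fin n × Fin n) k) :=
  vanishingIdeal k ((fun g ij => g.val ij.1 ij.2) '' s)

theorem mem_glVanishingIdeal {s : Set (GL (Fin n) k)} {p : MvPolynomial (Fin n × Fin n) k} :
    p ∈ glVanishingIdeal s ↔ ∀ g ∈ s, evalMatrix g.val p = 0 :=
  Set.forall_mem_image

theorem isInducing_glTop : IsInducing fun (g : GL (Fin n) k) (ij : Fin n × Fin n) =>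
    g.val ij.1 ij.2 where
  eq_induced := induced_compose

theorem noetherianSpace_glTop : NoetherianSpace (GL (Fin n) k) :=
  have := noetherianSpace_zTop (k := k) (σ := Fin n × Fin n)
  isInducing_glTop.noetherianSpace

theorem isIrreducible_glTop_iff {s : Set (GL (Fin n) k)} :
    IsIrreducible s ↔ (glVanishingIdeal s).IsPrime := by
  rw [← isIrreducible_image_iff_of_isInducing isInducing_glTop, isIrreducible_zTop_iff,
    glVanishingIdeal]

theorem mem_closure_glTop_iff {s : Set (GL (Fin n) k)} {g : GL (Fin n) k} :
    g ∈ closure s ↔ ∀ p ∈ glVanishingIdeal s, evalMatrix g.val p = 0 := by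
  rw [isInducing_glTop.closure_eq_preimage_closure_image, closure_zTop]
  rfl

theorem isClosed_glTop_setOf_forall (T : Set (MvPolynomial (Fin n × Fin n) k)) :
    IsClosed {g : GL (Fin n) k | ∀ p ∈ T, evalMatrix g.val p = 0} :=
  isClosed_of_closure_subset fun _ hg p hp =>
    mem_closure_glTop_iff.1 hg p (mem_glVanishingIdeal.2 fun _ h => h p hp)

theorem separatelyContinuousMul_glTop : SeparatelyContinuousMul (GL (Fin n) k) := by
  have h (a b : GL (Fin n) k) : Continuous fun g => a * g * b := by
    refine isInducing_glTop.continuous_iff.2 (continuous_generateFrom_iff.2 ?_)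
    rintro _ ⟨p, rfl⟩
    rw [← isClosed_compl_iff]
    convert isClosed_glTop_setOf_forall {matrixTranslate a.val b.val p} using 1
    ext g
    simp only [Set.mem_singleton_iff, forall_eq, Set.mem_ofPred_eq, evalMatrix_translate_self]
    exact not_not
  exact ⟨fun {a} => by simpa only [mul_one] using h a 1,
    fun {a} => by simpa only [one_mul] using h 1 a⟩

theorem isPrime_glVanishingIdeal {G : Subgroup (GL (Fin n) k)} (hG : IsConnectedSub k G) :
    (glVanishingIdeal (G : Set (GL (Fin n) k))).IsPrime := by
  have := noetherianSpace_glTop (k := k) (n := n)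
  have := separatelyContinuousMul_glTop (k := k) (n := n)
  have : NoetherianSpace G := IsInducing.subtypeVal.noetherianSpace
  have : SeparatelyContinuousMul G := inferInstanceAs (SeparatelyContinuousMul G.toSubmonoid)
  have : ConnectedSpace G := isConnected_iff_connectedSpace.1 hG
  exact isIrreducible_glTop_iff.1
    (isIrreducible_iff_irreducibleSpace.2 irreducibleSpace_of_noetherian_connected_group)

theorem subset_one_of_isPreconnected_of_isSemisimpleSub {G H : Subgroup (GL (Fin n) k)}
    (hG : IsSemisimpleSub k G) (hHG : H ≤ G) (hH : IsAlgSubgroup k H)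
    (hnorm : ∀ g ∈ G, ∀ h ∈ H, g * h * g⁻¹ ∈ H) (hcomm : ∀ a ∈ H, ∀ b ∈ H, a * b = b * a)
    {Z : Set (GL (Fin n) k)} (hZ : IsPreconnected Z) (hZH : Z ⊆ H) (h1 : 1 ∈ Z) :
    Z ⊆ {1} := by
  have := separatelyContinuousMul_glTop (k := k) (n := n)
  have hle : identityComponent H ≤ H := connectedComponentIn_subset _ _
  have hconn : IsConnected (identityComponent H : Set (GL (Fin n) k)) :=
    ⟨⟨1, one_mem _⟩, isPreconnected_connectedComponentIn⟩
  have hbot : identityComponent H = ⊥ := by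
    refine hG _ (hle.trans hHG) ⟨fun x hx g => ?_⟩ (Group.isSolvable_of_comm fun a b => ?_) ?_ hconn
    · exact mapsTo_connectedComponentIn_of_mapsTo
        ((continuous_mul_const (g : GL (Fin n) k)⁻¹).comp (continuous_const_mul (g : GL (Fin n) k)))
        (hnorm g g.2) H.one_mem
        (by simpa using mem_connectedComponentIn H.one_mem) hx
    · exact Subtype.ext (hcomm a (hle a.2) b (hle b.2))
    · exact closure_subset_iff_isClosed.1 <|
        hconn.isPreconnected.closure.subset_connectedComponentIn (subset_closure (one_mem _))
          (closure_minimal hle hH)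
  exact fun z hz => Subgroup.mem_bot.1 (hbot ▸ hZ.subset_connectedComponentIn h1 hZH hz)

end ZariskiTopology

section ExponentialSeries

open Matrix PowerSeries

variable {k ι : Type*} [Field k]

theorem constantCoeff_evalMatrix (Y : Matrix ι ι k⟦X⟧) (p : MvPolynomial (ι × ι) k) :
    PowerSeries.constantCoeff (evalMatrix Y p) =
      evalMatrix (Y.map (PowerSeries.constantCoeff (R := k))) p :=
  algHom_evalMatrix
    { PowerSeries.constantCoeff (R := k) with commutes' := PowerSeries.constantCoeff_C } Y p

variable [Fintype ι]

theorem evalMatrix_eq_zero_of_derivative_eq [CharZero k] {Y : Matrix ι ι k⟦X⟧} {x : Matrix ι ι k}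
    (hY : Y.map (derivative k) = Y * x.map (algebraMap k k⟦X⟧))
    {I : Ideal (MvPolynomial (ι × ι) k)} (hI : ∀ p ∈ I, leftInvariantDerivation x p ∈ I)
    (h0 : ∀ p ∈ I, evalMatrix (Y.map (PowerSeries.constantCoeff (R := k))) p = 0)
    {p : MvPolynomial (ι × ι) k} (hp : p ∈ I) : evalMatrix Y p = 0 := by
  ext m
  rw [map_zero]
  induction m generalizing p with
  | zero =>
    rw [coeff_zero_eq_constantCoeff_apply, constantCoeff_evalMatrix]
    exact h0 p hp
  | succ m ih =>
    have h := ih (hI p hp)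
    rw [evalMatrix_leftInvariantDerivation hY, coeff_derivative] at h
    exact (mul_eq_zero.1 h).resolve_right m.cast_add_one_ne_zero

variable [DecidableEq ι]

/-- The power series `exp (t x)` in `t`, for a square matrix `x`. -/
def matrixExpSeries (x : Matrix ι ι k) : Matrix ι ι k⟦X⟧ :=
  .of fun i j => .mk fun m => (x ^ m) i j / m.factorial

theorem constantCoeff_matrixExpSeries (x : Matrix ι ι k) :
    (matrixExpSeries x).map (PowerSeries.constantCoeff (R := k)) = 1 := by
  ext i j
  simp [matrixExpSeries, ← coeff_zero_eq_constantCoeff_apply]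

theorem derivative_matrixExpSeries [CharZero k] (x : Matrix ι ι k) :
    (matrixExpSeries x).map (derivative k) =
      matrixExpSeries x * x.map (algebraMap k k⟦X⟧) := by
  ext i j m
  have h : (m + 1 : k) ≠ 0 := m.cast_add_one_ne_zero
  simp only [matrixExpSeries, map_apply, of_apply, coeff_derivative, PowerSeries.coeff_mk,
    Nat.factorial_succ, pow_succ, Matrix.mul_apply, map_sum, PowerSeries.algebraMap_apply,
    Algebra.algebraMap_self, RingHom.id_apply, PowerSeries.coeff_mul_C, Finset.sum_div,
    Finset.sum_mul]
  refine Finset.sum_congr rfl fun l _ => ?_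
  push_cast
  field_simp

theorem coeff_one_matrixExpSeries (x : Matrix ι ι k) (i j : ι) :
    PowerSeries.coeff 1 (matrixExpSeries x i j) = x i j := by
  simp [matrixExpSeries]

theorem commute_matrixExpSeries {x y : Matrix ι ι k} (h : Commute x y) :
    Commute (matrixExpSeries x) (y.map (algebraMap k k⟦X⟧)) := by
  ext i j m
  have := congrFun₂ (h.pow_left m).eq i j
  simp only [Matrix.mul_apply] at this
  simp [matrixExpSeries, Matrix.mul_apply, div_mul_eq_mul_div, ← Finset.sum_div, this,
    mul_div_assoc']

end ExponentialSeries

section ExponentialClosure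

open Matrix

variable {k : Type*} [Field k] {n : ℕ}

/-- The Zariski closure in `GL n k` of the one-parameter group `exp (t x)`: the invertible matrices
at which all polynomial relations between the entries of the power series `exp (t x)` hold. -/
def expClosure (x : Matrix (Fin n) (Fin n) k) : Set (GL (Fin n) k) :=
  {g | ∀ p : MvPolynomial (Fin n × Fin n) k,
    evalMatrix (matrixExpSeries x) p = 0 → evalMatrix g.val p = 0}

theorem one_mem_expClosure (x : Matrix (Fin n) (Fin n) k) : 1 ∈ expClosure x := fun p hp => by
  rw [Units.val_one, ← constantCoeff_matrixExpSeries x, ← constantCoeff_evalMatrix, hp, map_zero]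

theorem glVanishingIdeal_expClosure [IsAlgClosed k] (x : Matrix (Fin n) (Fin n) k) :
    glVanishingIdeal (expClosure x) = RingHom.ker (evalMatrix (R := k) (matrixExpSeries x)) := by
  set J := RingHom.ker (evalMatrix (R := k) (matrixExpSeries x))
  have : J.IsPrime := RingHom.ker_isPrime _
  let d : MvPolynomial (Fin n × Fin n) k := (mvPolynomialX (Fin n) (Fin n) k).det
  have hd {S : Type _} [CommRing S] [Algebra k S] (Y : Matrix (Fin n) (Fin n) S) :
      evalMatrix Y d = Y.det := by
    rw [AlgHom.map_det, AlgHom.mapMatrix_apply, mvPolynomialX_map_evalMatrix]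
  have hdJ : d ∉ J := fun h => by
    have h1 := constantCoeff_evalMatrix (matrixExpSeries x) d
    rw [RingHom.mem_ker.1 h, constantCoeff_matrixExpSeries, hd, det_one, map_zero] at h1
    exact zero_ne_one h1
  refine le_antisymm (fun p hp => ?_) fun p hp => mem_glVanishingIdeal.2 fun g hg => hg p hp
  refine (this.mem_or_mem ?_).resolve_right hdJ
  rw [← IsPrime.vanishingIdeal_zeroLocus (K := k) J, mem_vanishingIdeal_iff]
  intro v hv
  let Y : Matrix (Fin n) (Fin n) k := .of fun i j => v (i, j)
  by_cases hY : Y.det = 0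
  · rw [map_mul]
    exact mul_eq_zero_of_right _ ((hd Y).trans hY)
  · rw [map_mul]
    exact mul_eq_zero_of_left
      (mem_glVanishingIdeal.1 hp (GeneralLinearGroup.mkOfDetNeZero Y hY) fun q hq => hv q hq) _

attribute [local instance] zTop glTop

theorem isPreconnected_expClosure [IsAlgClosed k] (x : Matrix (Fin n) (Fin n) k) :
    IsPreconnected (expClosure x) := by
  have h : IsIrreducible (expClosure x) :=
    isIrreducible_glTop_iff.2 (glVanishingIdeal_expClosure x ▸ RingHom.ker_isPrime _)
  exact h.isPreirreducible.isPreconnected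

theorem eq_zero_of_expClosure_subset_one [IsAlgClosed k] {x : Matrix (Fin n) (Fin n) k}
    (h : expClosure x ⊆ {1}) : x = 0 := by
  ext i j
  have hX : X (i, j) - C ((1 : Matrix (Fin n) (Fin n) k) i j) ∈ glVanishingIdeal (expClosure x) :=
    mem_glVanishingIdeal.2 fun g hg => by simp [Set.mem_singleton_iff.1 (h hg), algHom_C]
  rw [glVanishingIdeal_expClosure, RingHom.mem_ker, map_sub, evalMatrix_X, algHom_C, sub_eq_zero]
    at hX
  simpa [coeff_one_matrixExpSeries, PowerSeries.algebraMap_apply, PowerSeries.coeff_C] using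
    congrArg (PowerSeries.coeff 1) hX

theorem commute_of_mem_expClosure {x y : Matrix (Fin n) (Fin n) k} (h : Commute x y)
    {g : GL (Fin n) k} (hg : g ∈ expClosure x) : Commute g.val y := by
  ext i j
  have hij := hg (commutatorPolynomial y i j) (by
    rw [evalMatrix_commutatorPolynomial, (commute_matrixExpSeries h).eq, sub_self,
      Matrix.zero_apply])
  rwa [evalMatrix_commutatorPolynomial, Matrix.sub_apply, sub_eq_zero] at hij

theorem expClosure_subset_closure [CharZero k] {s : Set (GL (Fin n) k)} (hs : 1 ∈ s)
    {x : Matrix (Fin n) (Fin n) k}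
    (hx : ∀ p ∈ glVanishingIdeal s, leftInvariantDerivation x p ∈ glVanishingIdeal s) :
    expClosure x ⊆ closure s := by
  refine fun g hg => mem_closure_glTop_iff.2 fun p hp => hg p ?_
  refine evalMatrix_eq_zero_of_derivative_eq (derivative_matrixExpSeries x) hx (fun q hq => ?_) hp
  rw [constantCoeff_matrixExpSeries]
  exact mem_glVanishingIdeal.1 hq 1 hs

end ExponentialClosure

section LieAlgebras

open LieAlgebra

variable {k L L' : Type*} [CommRing k] [LieRing L] [LieAlgebra k L] [LieRing L'] [LieAlgebra k L']

theorem map_derivedSeriesOfIdeal_of_surjective {e : L →ₗ⁅k⁆ L'} (he : Function.Surjective e)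
    (m : ℕ) (I : LieIdeal k L) :
    (derivedSeriesOfIdeal k L m I).map e = derivedSeriesOfIdeal k L' m (I.map e) := by
  induction m with
  | zero => rfl
  | succ m ih =>
    rw [derivedSeriesOfIdeal_succ, LieIdeal.map_bracket_eq e he, ih, derivedSeriesOfIdeal_succ]

theorem isSolvable_iff_exists_derivedSeriesOfIdeal_eq_bot {I : LieIdeal k L} :
    IsSolvable I ↔ ∃ m, derivedSeriesOfIdeal k L m I = ⊥ := by
  simp only [isSolvable_iff k, LieIdeal.derivedSeries_eq_bot_iff]

theorem map_radical_le_of_surjective [IsNoetherian k L] [IsNoetherian k L'] {e : L →ₗ⁅k⁆ L'}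
    (he : Function.Surjective e) : (radical k L).map e ≤ radical k L' := by
  obtain ⟨m, hm⟩ :=
    isSolvable_iff_exists_derivedSeriesOfIdeal_eq_bot.1 (radicalIsSolvable (R := k) (L := L))
  refine (LieIdeal.solvable_iff_le_radical k L' _).1
    (isSolvable_iff_exists_derivedSeriesOfIdeal_eq_bot.2 ⟨m, ?_⟩)
  rw [← map_derivedSeriesOfIdeal_of_surjective he, hm, LieIdeal.map_eq_bot_iff]
  exact bot_le

-- The last nonzero term of the derived series of the radical is abelian and characteristic.
theorem hasTrivialRadical_of_forall_isLieAbelian_characteristic [IsNoetherian k L]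
    (h : ∀ I : LieIdeal k L, IsLieAbelian I → (∀ e : L ≃ₗ⁅k⁆ L, I.map (e : L →ₗ⁅k⁆ L) ≤ I) →
      I = ⊥) : HasTrivialRadical k L := by
  refine ⟨(abelian_of_solvable_ideal_eq_bot_iff _).1
    (h _ (abelian_derivedAbelianOfIdeal (radical k L)) fun e => ?_)⟩
  rw [derivedAbelianOfIdeal]
  split
  · exact (LieIdeal.map_eq_bot_iff.2 bot_le).le
  · rw [map_derivedSeriesOfIdeal_of_surjective e.surjective]
    exact derivedSeriesOfIdeal_mono (map_radical_le_of_surjective e.surjective) _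

theorem derivedSeries_one_eq_top_of_isKilling {k L : Type*} [Field k] [LieRing L] [LieAlgebra k L]
    [FiniteDimensional k L] [IsKilling k L] : derivedSeries k L 1 = ⊤ := by
  let J := (derivedSeries k L 1).killingCompl
  have hcompl : IsCompl (derivedSeries k L 1) J := LieIdeal.isCompl_killingCompl _
  have : IsLieAbelian J := (abelian_iff_derived_one_eq_bot J).2 <| eq_bot_iff.2 <|
    hcompl.disjoint (derivedSeriesOfIdeal_mono le_top 1) (derivedSeriesOfIdeal_le_self J 1)
  exact eq_top_of_isCompl_bot (IsKilling.ideal_eq_bot_of_isLieAbelian J ▸ hcompl)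

theorem lieCharacter_apply_of_isKilling {k L : Type*} [Field k] [LieRing L] [LieAlgebra k L]
    [FiniteDimensional k L] [IsKilling k L] (χ : LieCharacter k L) (x : L) : χ x = 0 :=
  lieCharacter_apply_of_mem_derived χ <| by
    rw [derivedSeries_one_eq_top_of_isKilling]
    exact LieSubmodule.mem_top x

end LieAlgebras

section LieAlgebraOfGroup

open Matrix

attribute [local instance] zTop glTop LieRing.ofAssociativeRing

variable {k : Type*} [Field k] {n : ℕ} {G : Subgroup (GL (Fin n) k)}

/-- The Lie algebra of a linear group `G`: the matrices whose left-invariant vector fields are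
tangent to `G`, i.e. preserve its vanishing ideal. -/
def glLieAlgebra (G : Subgroup (GL (Fin n) k)) : LieSubalgebra k (Matrix (Fin n) (Fin n) k) where
  carrier := {x | ∀ p ∈ glVanishingIdeal (G : Set (GL (Fin n) k)),
    leftInvariantDerivation x p ∈ glVanishingIdeal (G : Set (GL (Fin n) k))}
  add_mem' hx hy p hp := by
    rw [map_add]
    exact add_mem (hx p hp) (hy p hp)
  zero_mem' p _ := by
    rw [map_zero]
    exact zero_mem _
  smul_mem' c x hx p hp := by
    rw [map_smul, Derivation.smul_apply, smul_eq_C_mul]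
    exact Ideal.mul_mem_left _ _ (hx p hp)
  lie_mem' {x y} hx hy p hp := by
    rw [leftInvariantDerivation_lie, Derivation.commutator_apply]
    exact sub_mem (hx _ (hy p hp)) (hy _ (hx p hp))

theorem matrixTranslate_mem_glVanishingIdeal_iff {a b : GL (Fin n) k} (ha : a ∈ G) (hb : b ∈ G)
    {p : MvPolynomial (Fin n × Fin n) k} :
    matrixTranslate a.val b.val p ∈ glVanishingIdeal (G : Set (GL (Fin n) k)) ↔
      p ∈ glVanishingIdeal (G : Set (GL (Fin n) k)) := by
  simp only [mem_glVanishingIdeal, evalMatrix_translate_self, ← Units.val_mul, SetLike.mem_coe]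
  refine ⟨fun h g hg => ?_, fun h g hg => h _ (mul_mem (mul_mem ha hg) hb)⟩
  simpa [mul_assoc] using h (a⁻¹ * g * b⁻¹) (mul_mem (mul_mem (inv_mem ha) hg) (inv_mem hb))

theorem conj_mem_glLieAlgebra {g : GL (Fin n) k} (hg : g ∈ G) {x : Matrix (Fin n) (Fin n) k}
    (hx : x ∈ glLieAlgebra G) :
    g.val * x * g⁻¹.val ∈ glLieAlgebra G := fun p hp => by
  have h : x * g⁻¹.val = g⁻¹.val * (g.val * x * g⁻¹.val) := by
    rw [mul_assoc g.val, Units.inv_mul_cancel_left]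
  rw [← matrixTranslate_mem_glVanishingIdeal_iff G.one_mem (inv_mem hg),
    ← leftInvariantDerivation_translate h]
  exact hx _ ((matrixTranslate_mem_glVanishingIdeal_iff G.one_mem (inv_mem hg)).2 hp)

theorem conj_mem_centralizer {M : Type*} [Monoid M] {a : Set M} {u : Mˣ}
    (ha : ∀ x ∈ a, ↑u⁻¹ * x * u ∈ a) {x : M} (hx : x ∈ a.centralizer) :
    ↑u * x * ↑u⁻¹ ∈ a.centralizer := fun y hy => calc
  y * (↑u * x * ↑u⁻¹) = u * (↑u⁻¹ * y * u * x) * ↑u⁻¹ := by simp [mul_assoc]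
  _ = u * (x * (↑u⁻¹ * y * u)) * ↑u⁻¹ := by rw [hx _ (ha y hy)]
  _ = ↑u * x * ↑u⁻¹ * y := by simp [mul_assoc]

theorem mem_units_centralizer_iff {M : Type*} [Monoid M] {a : Set M} {u : Mˣ} :
    u ∈ (Submonoid.centralizer a).units ↔ ↑u ∈ a.centralizer :=
  ⟨fun h => h.1, fun h => ⟨h, fun y hy => Commute.units_inv_right (h y hy)⟩⟩

theorem isClosed_setOf_val_mem_centralizer (a : Set (Matrix (Fin n) (Fin n) k)) :
    IsClosed {g : GL (Fin n) k | g.val ∈ a.centralizer} := by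
  convert isClosed_glTop_setOf_forall {p | ∃ y ∈ a, ∃ i j, commutatorPolynomial y i j = p} using 1
  ext g
  have h (y : Matrix (Fin n) (Fin n) k) :
      y * g.val = g.val * y ↔ ∀ i j, evalMatrix g.val (commutatorPolynomial y i j) = 0 := by
    simp only [evalMatrix_commutatorPolynomial, ← Matrix.ext_iff, Matrix.sub_apply, sub_eq_zero,
      Algebra.algebraMap_self, RingHom.coe_id, Matrix.map_id, eq_comm]
  simp only [Set.mem_ofPred_eq, Set.mem_centralizer_iff, h]
  exact ⟨fun h p ⟨y, hy, i, j, hp⟩ => hp ▸ h y hy i j, fun h y hy i j => h _ ⟨y, hy, i, j, rfl⟩⟩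

-- The bicommutant of `a` in `G` is a commutative closed normal subgroup containing `exp (t x)`.
theorem eq_zero_of_mem_of_commute_of_conj_mem [IsAlgClosed k] [CharZero k] (hcl : IsAlgSubgroup k G)
    (hss : IsSemisimpleSub k G) {a : Set (Matrix (Fin n) (Fin n) k)}
    (ha : a ⊆ glLieAlgebra G) (hcomm : ∀ x ∈ a, ∀ y ∈ a, x * y = y * x)
    (hconj : ∀ g ∈ G, ∀ x ∈ a, g.val * x * g⁻¹.val ∈ a) {x : Matrix (Fin n) (Fin n) k}
    (hx : x ∈ a) : x = 0 := by
  let H : Subgroup (GL (Fin n) k) := G ⊓ (Submonoid.centralizer a.centralizer).units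
  have mem_H {g : GL (Fin n) k} : g ∈ H ↔ g ∈ G ∧ g.val ∈ a.centralizer.centralizer :=
    and_congr_right' mem_units_centralizer_iff
  have hH_closed : IsAlgSubgroup k H := by
    have h : (H : Set (GL (Fin n) k)) = ↑G ∩ {g | g.val ∈ a.centralizer.centralizer} :=
      Set.ext fun _ => mem_H
    rw [IsAlgSubgroup, h]
    exact hcl.inter (isClosed_setOf_val_mem_centralizer _)
  have hH_norm (g) (hg : g ∈ G) (h) (hh : h ∈ H) : g * h * g⁻¹ ∈ H := by
    refine mem_H.2 ⟨mul_mem (mul_mem hg (mem_H.1 hh).1) (inv_mem hg), ?_⟩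
    refine conj_mem_centralizer (fun y hy => ?_) (mem_H.1 hh).2
    simpa using conj_mem_centralizer (u := g⁻¹) (by simpa using hconj g hg) hy
  have hH_comm (g) (hg : g ∈ H) (h) (hh : h ∈ H) : g * h = h * g :=
    Units.ext (Set.centralizer_centralizer_comm_of_comm hcomm _ (mem_H.1 hg).2 _ (mem_H.1 hh).2)
  have hexp : expClosure x ⊆ H := fun g hg => mem_H.2
    ⟨hcl.closure_subset (expClosure_subset_closure G.one_mem (ha hx) hg),
      fun y hy => (commute_of_mem_expClosure (hy x hx) hg).symm⟩
  exact eq_zero_of_expClosure_subset_one <|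
    subset_one_of_isPreconnected_of_isSemisimpleSub hss inf_le_left hH_closed hH_norm hH_comm
      (isPreconnected_expClosure x) hexp (one_mem_expClosure x)

/-- The adjoint action of an element of `G` on the Lie algebra of `G`. -/
def adEquiv {g : GL (Fin n) k} (hg : g ∈ G) :
    glLieAlgebra G ≃ₗ⁅k⁆ glLieAlgebra G :=
  (g.val.lieConj g.invertible).ofSubalgebras _ _ <| by
    ext x
    refine ⟨?_, fun hx => ⟨g⁻¹.val * x * g.val, ?_, ?_⟩⟩
    · rintro ⟨y, hy, rfl⟩
      simpa using conj_mem_glLieAlgebra hg hy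
    · simpa using conj_mem_glLieAlgebra (inv_mem hg) hx
    · simp [mul_assoc]

theorem coe_adEquiv {g : GL (Fin n) k} (hg : g ∈ G) (x : glLieAlgebra G) :
    (adEquiv hg x : Matrix (Fin n) (Fin n) k) = g.val * x * g⁻¹.val := by
  simp [adEquiv]

theorem hasTrivialRadical_glLieAlgebra [IsAlgClosed k] [CharZero k] (hcl : IsAlgSubgroup k G)
    (hss : IsSemisimpleSub k G) : LieAlgebra.HasTrivialRadical k (glLieAlgebra G) := by
  refine hasTrivialRadical_of_forall_isLieAbelian_characteristic fun I hI hchar => ?_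
  refine (LieSubmodule.eq_bot_iff _).2 fun x hx => Subtype.ext ?_
  refine eq_zero_of_mem_of_commute_of_conj_mem hcl hss
    (a := (↑) '' (I : Set (glLieAlgebra G))) ?_ ?_ ?_ ⟨x, hx, rfl⟩
  · rintro _ ⟨y, -, rfl⟩
    exact y.2
  · rintro _ ⟨y, hy, rfl⟩ _ ⟨z, hz, rfl⟩
    have h : ⁅y, z⁆ = 0 := congrArg Subtype.val (hI.trivial ⟨y, hy⟩ ⟨z, hz⟩)
    exact sub_eq_zero.1 (congrArg Subtype.val h)
  · rintro g hg _ ⟨y, hy, rfl⟩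
    exact ⟨adEquiv hg y, hchar (adEquiv hg) (LieIdeal.mem_map hy), coe_adEquiv hg y⟩

end LieAlgebraOfGroup

section Characters

open Matrix

attribute [local instance] LieRing.ofAssociativeRing

variable {k : Type*} [Field k] {n : ℕ} {G : Subgroup (GL (Fin n) k)}
  {P : MvPolynomial (Fin n × Fin n) k}

/-- `P` is a polynomial in the matrix entries whose restriction to `G` is a character, i.e. a
homomorphism to the multiplicative group. -/
structure IsCharacterOn (G : Subgroup (GL (Fin n) k)) (P : MvPolynomial (Fin n × Fin n) k) :
    Prop where
  map_one : evalMatrix (1 : Matrix (Fin n) (Fin n) k) P = 1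
  map_mul : ∀ g ∈ G, ∀ h ∈ G,
    evalMatrix (g.val * h.val) P = evalMatrix g.val P * evalMatrix h.val P

theorem leftInvariantDerivation_sub_mem_of_isCharacterOn (hP : IsCharacterOn G P)
    {x : Matrix (Fin n) (Fin n) k} (hx : x ∈ glLieAlgebra G) :
    leftInvariantDerivation x P -
      C (evalMatrix (1 : Matrix (Fin n) (Fin n) k) (leftInvariantDerivation x P)) * P ∈
        glVanishingIdeal (G : Set (GL (Fin n) k)) := mem_glVanishingIdeal.2 fun g hg => by
  have h : matrixTranslate g.val 1 P - C (evalMatrix g.val P) * P ∈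
      glVanishingIdeal (G : Set (GL (Fin n) k)) := mem_glVanishingIdeal.2 fun h hh => by
    simp [evalMatrix_translate_self, hP.map_mul g hg h hh, algHom_C]
  have h1 := mem_glVanishingIdeal.1 (hx _ h) 1 G.one_mem
  rw [map_sub, leftInvariantDerivation_translate (by rw [mul_one, one_mul])] at h1
  simpa [evalMatrix_translate_self, algHom_C, mul_comm] using h1

/-- The differential at the identity of a character of `G`. -/
def differentialOfIsCharacterOn (hP : IsCharacterOn G P) :
    LieAlgebra.LieCharacter k (glLieAlgebra G) where
  toFun x := evalMatrix (1 : Matrix (Fin n) (Fin n) k) (leftInvariantDerivation x.val P)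
  map_add' x y := by simp
  map_smul' c x := by simp
  map_lie' {x y} := by
    have key (x y : glLieAlgebra G) :
        evalMatrix (1 : Matrix (Fin n) (Fin n) k)
            (leftInvariantDerivation x.val (leftInvariantDerivation y.val P)) =
          evalMatrix (1 : Matrix (Fin n) (Fin n) k) (leftInvariantDerivation x.val P) *
            evalMatrix (1 : Matrix (Fin n) (Fin n) k) (leftInvariantDerivation y.val P) := by
      have h := mem_glVanishingIdeal.1
        (x.2 _ (leftInvariantDerivation_sub_mem_of_isCharacterOn hP y.2)) 1 G.one_mem
      simpa [sub_eq_zero, algHom_C, mul_comm] using h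
    change evalMatrix 1 (leftInvariantDerivation ⁅x.val, y.val⁆ P) = _
    rw [leftInvariantDerivation_lie, Derivation.commutator_apply, map_sub, key, key]
    rfl

theorem leftInvariantDerivation_mem_of_isCharacterOn [IsAlgClosed k] [CharZero k]
    (hcl : IsAlgSubgroup k G) (hss : IsSemisimpleSub k G) (hP : IsCharacterOn G P)
    {x : Matrix (Fin n) (Fin n) k} (hx : x ∈ glLieAlgebra G) :
    leftInvariantDerivation x P ∈ glVanishingIdeal (G : Set (GL (Fin n) k)) := by
  have := hasTrivialRadical_glLieAlgebra hcl hss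
  have h0 : evalMatrix (1 : Matrix (Fin n) (Fin n) k) (leftInvariantDerivation x P) = 0 :=
    lieCharacter_apply_of_isKilling (differentialOfIsCharacterOn hP) ⟨x, hx⟩
  simpa [h0] using leftInvariantDerivation_sub_mem_of_isCharacterOn hP hx

-- The left-invariant field agreeing with `D` at `g` is tangent to `G` everywhere, by translation.
theorem exists_mem_glLieAlgebra_evalMatrix_eq
    {D : Derivation k (MvPolynomial (Fin n × Fin n) k) (MvPolynomial (Fin n × Fin n) k)}
    (hD : ∀ p ∈ glVanishingIdeal (G : Set (GL (Fin n) k)),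
      D p ∈ glVanishingIdeal (G : Set (GL (Fin n) k)))
    {g : GL (Fin n) k} (hg : g ∈ G) :
    ∃ x ∈ glLieAlgebra G, ∀ p, evalMatrix g.val (leftInvariantDerivation x p) =
      evalMatrix g.val (D p) := by
  let x : Matrix (Fin n) (Fin n) k := g⁻¹.val * .of fun i j => evalMatrix g.val (D (X (i, j)))
  have hxD : ∀ p, evalMatrix g.val (leftInvariantDerivation x p) = evalMatrix g.val (D p) :=
    map_derivation_congr fun ij => by
      simp [evalMatrix_leftInvariantDerivation_X, x]
  refine ⟨x, fun p hp => mem_glVanishingIdeal.2 fun h hh => ?_, hxD⟩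
  have hp' : matrixTranslate (h * g⁻¹).val (1 : GL (Fin n) k).val p ∈
      glVanishingIdeal (G : Set (GL (Fin n) k)) :=
    (matrixTranslate_mem_glVanishingIdeal_iff (mul_mem hh (inv_mem hg)) G.one_mem).2 hp
  have h0 := (hxD _).trans (mem_glVanishingIdeal.1 (hD _ hp') g hg)
  have hx1 : x * (1 : GL (Fin n) k).val = (1 : GL (Fin n) k).val * x := by
    rw [Units.val_one, mul_one, one_mul]
  rw [leftInvariantDerivation_translate hx1, evalMatrix_translate_self] at h0
  simpa using h0

theorem exists_sub_C_mem_of_forall_leftInvariantDerivation_mem [IsAlgClosed k] [CharZero k]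
    (hG : IsConnectedSub k G) {p : MvPolynomial (Fin n × Fin n) k}
    (hp : ∀ x ∈ glLieAlgebra G,
      leftInvariantDerivation x p ∈ glVanishingIdeal (G : Set (GL (Fin n) k))) :
    ∃ c, p - C c ∈ glVanishingIdeal (G : Set (GL (Fin n) k)) := by
  have := isPrime_glVanishingIdeal hG
  have halg : IsAlgebraic k (Ideal.Quotient.mk (glVanishingIdeal (G : Set (GL (Fin n) k))) p) := by
    by_contra htrans
    obtain ⟨D, hD, hDp⟩ := exists_derivation_stable_notMem _ htrans
    refine hDp (mem_glVanishingIdeal.2 fun g hg => ?_)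
    obtain ⟨x, hx, hxD⟩ := exists_mem_glLieAlgebra_evalMatrix_eq hD hg
    rw [← hxD]
    exact mem_glVanishingIdeal.1 (hp x hx) g hg
  obtain ⟨c, hc⟩ := minpoly.mem_range_of_degree_eq_one k _
    (IsAlgClosed.degree_eq_one_of_irreducible k (minpoly.irreducible halg.isIntegral))
  exact ⟨c, Ideal.Quotient.eq.1 hc.symm⟩

theorem evalMatrix_eq_one_of_isCharacterOn [IsAlgClosed k] [CharZero k]
    (hcl : IsAlgSubgroup k G) (hG : IsConnectedSub k G) (hss : IsSemisimpleSub k G)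
    (hP : IsCharacterOn G P) {g : GL (Fin n) k} (hg : g ∈ G) : evalMatrix g.val P = 1 := by
  obtain ⟨c, hc⟩ := exists_sub_C_mem_of_forall_leftInvariantDerivation_mem hG fun x =>
    leftInvariantDerivation_mem_of_isCharacterOn hcl hss hP
  have h (g) (hg : g ∈ G) : evalMatrix g.val P = c := by
    simpa [sub_eq_zero, algHom_C] using mem_glVanishingIdeal.1 hc g hg
  rw [h g hg, ← h 1 G.one_mem, Units.val_one, hP.map_one]

end Characters

section SemiInvariants

open Matrix

theorem eval_mul_eval_eq_of_associated {R σ : Type*} [CommRing R] [IsReduced R]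
    {p q : MvPolynomial σ R} (h : Associated p q) (v w : σ → R) :
    eval v p * eval w q = eval w p * eval v q := by
  obtain ⟨u, rfl⟩ := h
  obtain ⟨c, -, hc⟩ := isUnit_iff_eq_C_of_isReduced.1 u.isUnit
  simp only [hc, map_mul, eval_C]
  ring

variable {R ι : Type*} [CommRing R] [Fintype ι]

theorem eval_bind₁_toMvPolynomial (a : Matrix ι ι R) (v : ι → R) (q : MvPolynomial ι R) :
    eval v (bind₁ a.toMvPolynomial q) = eval (a *ᵥ v) q := by
  simp only [← aeval_eq_eval, aeval_bind₁]
  simp only [aeval_eq_eval, toMvPolynomial_eval_eq_apply]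

/-- The automorphism `q ↦ q ∘ g` of the polynomial ring induced by an invertible matrix `g`. -/
def linearSubstitution [DecidableEq ι] (g : GL ι R) : MvPolynomial ι R ≃ₐ[R] MvPolynomial ι R :=
  AlgEquiv.ofAlgHom (bind₁ g.val.toMvPolynomial) (bind₁ g⁻¹.val.toMvPolynomial)
    (algHom_ext fun i => by simp [← toMvPolynomial_mul])
    (algHom_ext fun i => by simp [← toMvPolynomial_mul])

theorem eval_linearSubstitution [DecidableEq ι] (g : GL ι R) (v : ι → R) (q : MvPolynomial ι R) :
    eval v (linearSubstitution g q) = eval (g.val *ᵥ v) q :=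
  eval_bind₁_toMvPolynomial _ v q

/-- The orbit map of `v` followed by `q`, i.e. the function `g ↦ q(g v)`, as a polynomial in the
entries of `g`. -/
def orbitPolynomial (v : ι → R) (q : MvPolynomial ι R) : MvPolynomial (ι × ι) R :=
  aeval (mvPolynomialX ι ι R *ᵥ fun i => C (v i)) q

theorem evalMatrix_orbitPolynomial (a : Matrix ι ι R) (v : ι → R) (q : MvPolynomial ι R) :
    evalMatrix a (orbitPolynomial v q) = eval (a *ᵥ v) q := by
  rw [orbitPolynomial, ← AlgHom.comp_apply, ← aeval_eq_eval]
  congr 1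
  ext i
  simp [mulVec, dotProduct, algHom_C]

variable {k : Type*} [Field k] {n : ℕ} {G : Subgroup (GL (Fin n) k)}

theorem exists_subset_glVanishingIdeal {κ : Type*} (s : Finset κ)
    (S : κ → Set (MvPolynomial (Fin n × Fin n) k)) (hG : IsConnectedSub k G)
    (h : ∀ g ∈ G, ∃ i ∈ s, ∀ p ∈ S i, evalMatrix g.val p = 0) :
    ∃ i ∈ s, S i ⊆ glVanishingIdeal (G : Set (GL (Fin n) k)) := by
  simp only [← Ideal.span_le]
  refine ((isPrime_glVanishingIdeal hG).prod_le).1 fun p hp => mem_glVanishingIdeal.2 fun g hg => ?_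
  obtain ⟨i, hi, hgi⟩ := h g hg
  have hle : Ideal.span (S i) ≤ RingHom.ker (evalMatrix (R := k) g.val) := Ideal.span_le.2 hgi
  exact hle (Ideal.le_of_dvd (Finset.dvd_prod_of_mem _ hi) hp)

/-- `q` is a semi-invariant of `G`: each `g ∈ G` maps it to a scalar multiple of itself. -/
def IsSemiInvariant (G : Subgroup (GL (Fin n) k)) (q : MvPolynomial (Fin n) k) : Prop :=
  ∀ g ∈ G, ∃ c, ∀ v, eval (g.val *ᵥ v) q = c * eval v q

theorem exists_eval_ne_zero [Infinite k] {q : MvPolynomial (Fin n) k} (hq : q ≠ 0) :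
    ∃ v, eval v q ≠ 0 := by
  by_contra! h
  exact hq (MvPolynomial.funext (by simpa using h))

theorem isSemiInvariant_of_forall_eval_mul_eval_eq [Infinite k] {q r : MvPolynomial (Fin n) k}
    (hr : r ≠ 0)
    (h : ∀ g ∈ G, ∀ v w, eval (g.val *ᵥ v) q * eval w r = eval (g.val *ᵥ w) q * eval v r) :
    IsSemiInvariant G q := by
  obtain ⟨w, hw⟩ := exists_eval_ne_zero hr
  have h1 (v) : eval v q * eval w r = eval w q * eval v r := by
    simpa using h 1 G.one_mem v w
  by_cases hq : eval w q = 0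
  · have hq0 (v) : eval v q = 0 := by simpa [hq, hw] using h1 v
    exact fun g _ => ⟨0, fun v => by simp [hq0]⟩
  · refine fun g hg => ⟨eval (g.val *ᵥ w) q / eval w q, fun v => ?_⟩
    rw [div_mul_eq_mul_div, eq_div_iff hq]
    apply mul_right_cancel₀ hw
    linear_combination eval w q * h g hg v w - eval (g.val *ᵥ w) q * h1 v

-- `G` permutes the finitely many factors of `p` up to scalars, and by connectedness it fixes each.
theorem isSemiInvariant_of_irreducible_of_dvd [Infinite k] (hG : IsConnectedSub k G)
    {p q : MvPolynomial (Fin n) k} (hp : p ∈ invAlg k G) (hp0 : p ≠ 0) (hq : Irreducible q)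
    (hqp : q ∣ p) : IsSemiInvariant G q := by
  classical
  let s := (UniqueFactorizationMonoid.factors p).toFinset
  let relation (r : MvPolynomial (Fin n) k) (v w : Fin n → k) :=
    orbitPolynomial v q * C (eval w r) - orbitPolynomial w q * C (eval v r)
  have hrel (g : GL (Fin n) k) (r v w) : evalMatrix g.val (relation r v w) = 0 ↔
      eval (g.val *ᵥ v) q * eval w r = eval (g.val *ᵥ w) q * eval v r := by
    simp [relation, sub_eq_zero, evalMatrix_orbitPolynomial, algHom_C]
  have hfactor : ∀ g ∈ G, ∃ r ∈ s, ∀ P ∈ Set.range (Function.uncurry (relation r)),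
      evalMatrix g.val P = 0 := fun g hg => by
    have hgp : linearSubstitution g p = p :=
      MvPolynomial.funext fun v => by rw [eval_linearSubstitution, hp g hg]
    obtain ⟨r, hr, hgr⟩ := UniqueFactorizationMonoid.exists_mem_factors_of_dvd hp0
      ((MulEquiv.irreducible_iff (linearSubstitution g)).2 hq)
      (hgp ▸ map_dvd (linearSubstitution g) hqp)
    refine ⟨r, Multiset.mem_toFinset.2 hr, Set.forall_mem_range.2 fun vw => (hrel ..).2 ?_⟩
    simpa only [eval_linearSubstitution] using eval_mul_eval_eq_of_associated hgr vw.1 vw.2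
  obtain ⟨r, hr, hrG⟩ := exists_subset_glVanishingIdeal s _ hG hfactor
  have hr0 : r ≠ 0 :=
    (UniqueFactorizationMonoid.irreducible_of_factor r (Multiset.mem_toFinset.1 hr)).ne_zero
  exact isSemiInvariant_of_forall_eval_mul_eval_eq hr0 fun g hg v w =>
    (hrel ..).1 (mem_glVanishingIdeal.1 (hrG ⟨(v, w), rfl⟩) g hg)

theorem IsSemiInvariant.isCharacterOn {q : MvPolynomial (Fin n) k} (hq : IsSemiInvariant G q)
    {w : Fin n → k} (hw : eval w q ≠ 0) :
    IsCharacterOn G (C (eval w q)⁻¹ * orbitPolynomial w q) where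
  map_one := by simp [evalMatrix_orbitPolynomial, algHom_C, hw]
  map_mul g hg h _ := by
    obtain ⟨c, hc⟩ := hq g hg
    simp only [map_mul, algHom_C, Algebra.algebraMap_self, RingHom.id_apply,
      evalMatrix_orbitPolynomial, ← mulVec_mulVec, hc]
    field_simp

theorem IsSemiInvariant.mem_invAlg [IsAlgClosed k] [CharZero k] (hcl : IsAlgSubgroup k G)
    (hG : IsConnectedSub k G) (hss : IsSemisimpleSub k G) {q : MvPolynomial (Fin n) k}
    (hq : IsSemiInvariant G q) : q ∈ invAlg k G := by
  obtain rfl | hq0 := eq_or_ne q 0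
  · exact zero_mem _
  obtain ⟨w, hw⟩ := exists_eval_ne_zero hq0
  intro g hg v
  obtain ⟨c, hc⟩ := hq g hg
  have h1 := evalMatrix_eq_one_of_isCharacterOn hcl hG hss (hq.isCharacterOn hw) hg
  have hc1 : c = 1 := by
    simpa [evalMatrix_orbitPolynomial, algHom_C, hc, hw, mul_left_comm] using h1
  rw [hc, hc1, one_mul]

end SemiInvariants

section Nullcone

variable {k : Type*} [Field k] {n : ℕ} {G : Subgroup (GL (Fin n) k)}

theorem isIrreducible_zeroLocus [IsAlgClosed k] {σ : Type*} [Finite σ]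
    (I : Ideal (MvPolynomial σ k)) [I.IsPrime] : @IsIrreducible _ (zTop k σ) (zeroLocus k I) :=
  isIrreducible_zTop_iff.2 (by rwa [IsPrime.vanishingIdeal_zeroLocus])

theorem exists_irreducible_dvd_map_eq_zero {A B : Type*} [CommRing A]
    [UniqueFactorizationMonoid A] [CommRing B] [IsDomain B] (φ : A →+* B) {a : A} (ha : a ≠ 0)
    (hφ : φ a = 0) : ∃ b, Irreducible b ∧ b ∣ a ∧ φ b = 0 := by
  have hmem : (UniqueFactorizationMonoid.factors a).prod ∈ RingHom.ker φ :=
    (Ideal.mem_iff_of_associated (UniqueFactorizationMonoid.factors_prod ha)).2 hφ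
  obtain ⟨b, hb, hφb⟩ := ((RingHom.ker_isPrime φ).multiset_prod_mem_iff_exists_mem _).1 hmem
  exact ⟨b, UniqueFactorizationMonoid.irreducible_of_factor b hb,
    UniqueFactorizationMonoid.dvd_of_mem_factors hb, hφb⟩

/-- Evaluation of invariants at the origin, i.e. the point `π(0)` of `V⫽G`. -/
def invEvalZero (G : Subgroup (GL (Fin n) k)) : invAlg k G →ₐ[k] k :=
  (aeval 0).comp (invAlg k G).val

theorem invEvalZero_apply (p : invAlg k G) : invEvalZero G p = eval 0 p.val :=
  rfl

theorem ker_ne_bot_of_ringKrullDim_ne_zero {A : Type*} [CommRing A] [Algebra k A] (φ : A →ₐ[k] k)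
    (hA : ringKrullDim A ≠ 0) : RingHom.ker φ ≠ ⊥ := fun hker => hA <| by
  have hbij : Function.Bijective φ :=
    ⟨(RingHom.injective_iff_ker_eq_bot φ).2 hker, fun c => ⟨algebraMap k A c, φ.commutes c⟩⟩
  rw [ringKrullDim_eq_of_ringEquiv (RingEquiv.ofBijective φ hbij), ringKrullDim_eq_zero_of_field]

theorem exists_irreducible_mem_invAlg [IsAlgClosed k] [CharZero k] (hcl : IsAlgSubgroup k G)
    (hG : IsConnectedSub k G) (hss : IsSemisimpleSub k G) (hdim : ringKrullDim (invAlg k G) ≠ 0) :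
    ∃ f ∈ invAlg k G, Irreducible f ∧ eval 0 f = 0 := by
  obtain ⟨⟨p, hp⟩, hpker, hp0⟩ :=
    Submodule.exists_mem_ne_zero_of_ne_bot (ker_ne_bot_of_ringKrullDim_ne_zero (invEvalZero G) hdim)
  have hp0 : p ≠ 0 := fun h => hp0 (Subtype.ext h)
  obtain ⟨f, hf, hfp, hf0⟩ := exists_irreducible_dvd_map_eq_zero (eval (0 : Fin n → k)) hp0 hpker
  exact ⟨f, (isSemiInvariant_of_irreducible_of_dvd hG hp hp0 hf hfp).mem_invAlg hcl hG hss, hf, hf0⟩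

theorem ker_invEvalZero_eq_comap_span [Ring.KrullDimLE 1 (invAlg k G)] {f : MvPolynomial (Fin n) k}
    (hf : Prime f) (hfG : f ∈ invAlg k G) (hf0 : eval 0 f = 0) :
    RingHom.ker (invEvalZero G) = (Ideal.span {f}).comap (invAlg k G).val := by
  have : (Ideal.span {f}).IsPrime := (Ideal.span_singleton_prime hf.ne_zero).2 hf
  have : (⊥ : Ideal (invAlg k G)).IsPrime := Ideal.isPrime_bot
  have hle : (Ideal.span {f}).comap (invAlg k G).val ≤ RingHom.ker (invEvalZero G) := by
    rintro a ha
    obtain ⟨b, hb⟩ := Ideal.mem_span_singleton.1 ha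
    rw [RingHom.mem_ker, invEvalZero_apply]
    exact (congrArg (eval 0) hb).trans (by rw [map_mul, hf0, zero_mul])
  have hne : (Ideal.span {f}).comap (invAlg k G).val ≠ ⊥ := fun h => hf.ne_zero <|
    congrArg Subtype.val <| (Submodule.eq_bot_iff _).1 h ⟨f, hfG⟩ (Ideal.mem_span_singleton_self f)
  have hmax := Ring.krullDimLE_one_iff_of_isPrime_bot.1 ‹_› _ hne inferInstance
  exact (hmax.eq_of_le (RingHom.ker_ne_top _) hle).symm

theorem mem_nullcone_iff {v : Fin n → k} :
    v ∈ nullcone k G ↔ ∀ p ∈ RingHom.ker (invEvalZero G), eval v p.val = 0 := by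
  refine ⟨fun hv p hp => (hv p p.2).trans hp, fun hv p hp => ?_⟩
  have := hv (⟨p, hp⟩ - algebraMap k _ (eval 0 p)) (by simp [RingHom.mem_ker, invEvalZero_apply])
  simpa [sub_eq_zero] using this

theorem nullcone_eq_zeroLocus_span [Ring.KrullDimLE 1 (invAlg k G)] {f : MvPolynomial (Fin n) k}
    (hf : Prime f) (hfG : f ∈ invAlg k G) (hf0 : eval 0 f = 0) :
    nullcone k G = zeroLocus k (Ideal.span {f}) := by
  ext v
  rw [mem_nullcone_iff, ker_invEvalZero_eq_comap_span hf hfG hf0]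
  refine ⟨fun hv p hp => ?_, fun hv p hp => hv p.val hp⟩
  obtain ⟨b, rfl⟩ := Ideal.mem_span_singleton.1 hp
  simp [aeval_eq_eval, hv ⟨f, hfG⟩ (Ideal.mem_span_singleton_self f)]

end Nullcone

/-- If `dim V⫽G = 1`, the nullcone is irreducible. -/
theorem stmt4 {k : Type*} [Field k] [IsAlgClosed k] [CharZero k] {n : ℕ}
    (G : Subgroup (GL (Fin n) k))
    (hcl : IsAlgSubgroup k G) (hconn : IsConnectedSub k G) (hss : IsSemisimpleSub k G)
    (hdim : ringKrullDim (invAlg k G) = 1) :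
    @IsIrreducible _ (zTop k (Fin n)) (nullcone k G) := by
  obtain ⟨f, hfG, hf, hf0⟩ :=
    exists_irreducible_mem_invAlg hcl hconn hss (hdim.trans_ne one_ne_zero)
  have : Ring.KrullDimLE 1 (invAlg k G) := Ring.krullDimLE_iff.2 hdim.le
  have : (Ideal.span {f}).IsPrime := (Ideal.span_singleton_prime hf.ne_zero).2 hf.prime
  rw [nullcone_eq_zeroLocus_span hf.prime hfG hf0]
  exact isIrreducible_zeroLocus _

end
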